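/- In Stage One of SHALE, each un-capped dual update grows by at least the relative delivery shortfall times the priority: for every iteration t and every contract j, if α^{t+1}_j ≠ p_j then α^{t+1}_j ≥ α^t_j + V_j·(1 − d_j(α^t)/d_j). -/

import Mathlib

open Finset Filter Topology

noncomputable section

variable {I J : Type*} [Fintype I] [Fintype J]

open Classical in
/-- Γ(j): the impressions eligible for contract `j`. -/
def GammaD (adj : I → J → Prop) (j : J) : Finset I :=
  Finset.univ.filter (fun i => adj i j)

open Classical in
/-- Γ(i): the contracts eligible for impression `i`. -/
def GammaS (adj : I → J → Prop) (i : I) : Finset J :=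
  Finset.univ.filter (fun j => adj i j)

/-- Total eligible supply `S_j = ∑_{i ∈ Γ(j)} s_i`. -/
def Stot (adj : I → J → Prop) (s : I → ℝ) (j : J) : ℝ :=
  ∑ i ∈ GammaD adj j, s i

/-- Target `θ_{ij} = d_j / S_j` (independent of `i`). -/
def theta (adj : I → J → Prop) (s : I → ℝ) (d : J → ℝ) (j : J) : ℝ :=
  d j / Stot adj s j

/-- `g_{ij}(z) = max {0, θ_{ij} (1 + z / V_j)}` (independent of `i`). -/
def gfun (adj : I → J → Prop) (s : I → ℝ) (d V : J → ℝ) (j : J) (z : ℝ) : ℝ :=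
  max 0 ((theta adj s d j) * (1 + z / V j))

/-- `b` is a valid supply dual `β_i` for demand duals `α`: `b ≥ 0` and either `b = 0` with
`∑_{j ∈ Γ(i)} g_{ij}(α_j) ≤ 1`, or `∑_{j ∈ Γ(i)} g_{ij}(α_j − b) = 1`. -/
def BetaSpec (adj : I → J → Prop) (s : I → ℝ) (d V : J → ℝ)
    (α : J → ℝ) (i : I) (b : ℝ) : Prop :=
  0 ≤ b ∧ ((b = 0 ∧ ∑ j ∈ GammaS adj i, gfun adj s d V j (α j) ≤ 1) ∨
    ∑ j ∈ GammaS adj i, gfun adj s d V j (α j - b) = 1)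

/-- Stage One of SHALE: `α⁰ = 0`; `β^t_i` is a valid supply dual for `α^t`; and
`α^{t+1}_j = min (p_j) a_j` where `a_j` solves `∑_{i ∈ Γ(j)} s_i g_{ij}(a_j − β^t_i) = d_j`. -/
def StageOne (adj : I → J → Prop) (s : I → ℝ) (d p V : J → ℝ)
    (α : ℕ → J → ℝ) (β : ℕ → I → ℝ) : Prop :=
  (∀ j, α 0 j = 0) ∧
  (∀ t i, BetaSpec adj s d V (α t) i (β t i)) ∧
  (∀ t j, ∃ a : ℝ,
    (∑ i ∈ GammaD adj j, s i * gfun adj s d V j (a - β t i) = d j) ∧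
    α (t + 1) j = min (p j) a)

/-- Projected delivery `d_j(α) = ∑_{i ∈ Γ(j)} s_i g_{ij}(α_j − β_i)`. -/
def Dproj (adj : I → J → Prop) (s : I → ℝ) (d V : J → ℝ)
    (α : J → ℝ) (β : I → ℝ) (j : J) : ℝ :=
  ∑ i ∈ GammaD adj j, s i * gfun adj s d V j (α j - β i)

/-- The objective of the allocation problem. -/
def Fobj (adj : I → J → Prop) (s : I → ℝ) (d p V : J → ℝ)
    (x : I → J → ℝ) (u : J → ℝ) : ℝ :=
  (1 / 2) * ∑ j, ∑ i ∈ GammaD adj j,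
      s i * (V j / theta adj s d j) * (x i j - theta adj s d j) ^ 2
    + ∑ j, p j * u j

/-- Feasibility for the allocation problem. -/
def Feasible (adj : I → J → Prop) (s : I → ℝ) (d : J → ℝ)
    (x : I → J → ℝ) (u : J → ℝ) : Prop :=
  (∀ j, d j ≤ ∑ i ∈ GammaD adj j, s i * x i j + u j) ∧
  (∀ i, ∑ j ∈ GammaS adj i, x i j ≤ 1) ∧
  (∀ i j, adj i j → 0 ≤ x i j) ∧
  (∀ j, 0 ≤ u j)

/-- The KKT conditions for duals `(α, β)`. -/
def KKT (adj : I → J → Prop) (s : I → ℝ) (d p V : J → ℝ)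
    (α : J → ℝ) (β : I → ℝ) : Prop :=
  (∀ j, 0 ≤ α j ∧ α j ≤ p j) ∧
  (∀ i, 0 ≤ β i ∧ (∑ j ∈ GammaS adj i, gfun adj s d V j (α j - β i) ≤ 1) ∧
    (0 < β i → ∑ j ∈ GammaS adj i, gfun adj s d V j (α j - β i) = 1)) ∧
  (∀ j, (∑ i ∈ GammaD adj j, s i * gfun adj s d V j (α j - β i) ≤ d j) ∧
    (α j < p j → ∑ i ∈ GammaD adj j, s i * gfun adj s d V j (α j - β i) = d j))

/-!
The supply dual `β_i` increases with `α`, and the uncapped demand dual `a_j` increases with `β`.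
Since `a_j = 0` is the solution for `β = 0`, the first step satisfies `α⁰ ≤ α¹`, and by induction
`α^t` increases in `t`.

The function `g_{ij}` has slope at most `θ_{ij} / V_j`, and `∑_{i ∈ Γ(j)} s_i θ_{ij} = d_j`. Raising
`α_j` to `a_j ≥ α_j` therefore adds at most `d_j (a_j - α_j) / V_j` to the delivery of contract `j`;
as it must close the gap `d_j - d_j(α)`, the increment `a_j - α_j` is at least
`V_j (1 - d_j(α) / d_j)`.
-/

theorem sum_lt_sum_of_lt_of_pos {ι M : Type*} [AddCommMonoid M] [LinearOrder M]
    [IsOrderedCancelAddMonoid M] {A : Finset ι} {f g : ι → M} (hle : ∀ i ∈ A, f i ≤ g i)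
    (hlt : ∀ i ∈ A, 0 < f i → f i < g i) (hpos : 0 < ∑ i ∈ A, f i) :
    ∑ i ∈ A, f i < ∑ i ∈ A, g i := by
  obtain ⟨i, hi, hfi⟩ : ∃ i ∈ A, 0 < f i :=
    exists_lt_of_sum_lt (f := fun _ ↦ 0) (by rwa [sum_const_zero])
  exact sum_lt_sum hle ⟨i, hi, hlt i hi hfi⟩

section Demand

omit [Fintype J]

variable {adj : I → J → Prop} {s : I → ℝ} {d V : J → ℝ} {j : J}

theorem theta_pos (hd : 0 < d j) (hS : 0 < Stot adj s j) : 0 < theta adj s d j :=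
  div_pos hd hS

theorem sum_supply_mul_theta (hS : Stot adj s j ≠ 0) :
    ∑ i ∈ GammaD adj j, s i * theta adj s d j = d j := by
  rw [← sum_mul]
  exact mul_div_cancel₀ (d j) hS

theorem gfun_zero (hθ : 0 ≤ theta adj s d j) : gfun adj s d V j 0 = theta adj s d j := by
  simp [gfun, hθ]

theorem gfun_mono (hθ : 0 ≤ theta adj s d j) (hV : 0 ≤ V j) : Monotone (gfun adj s d V j) := by
  intro x y hxy
  unfold gfun
  gcongr

theorem gfun_lt_gfun_of_pos (hθ : 0 < theta adj s d j) (hV : 0 < V j) {x y : ℝ}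
    (hx : 0 < gfun adj s d V j x) (hxy : x < y) : gfun adj s d V j x < gfun adj s d V j y := by
  have affine_lt : theta adj s d j * (1 + x / V j) < theta adj s d j * (1 + y / V j) := by gcongr
  exact max_lt (hx.trans_le (gfun_mono hθ.le hV.le hxy.le)) (affine_lt.trans_le (le_max_right _ _))

theorem gfun_le_gfun_add (hθ : 0 ≤ theta adj s d j) (hV : 0 ≤ V j) {x y : ℝ} (hxy : x ≤ y) :
    gfun adj s d V j y ≤ gfun adj s d V j x + theta adj s d j * ((y - x) / V j) := by
  have increment_nonneg : 0 ≤ theta adj s d j * ((y - x) / V j) :=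
    mul_nonneg hθ (div_nonneg (sub_nonneg.2 hxy) hV)
  refine max_le (add_nonneg (le_max_left _ _) increment_nonneg) ?_
  calc theta adj s d j * (1 + y / V j)
      = theta adj s d j * (1 + x / V j) + theta adj s d j * ((y - x) / V j) := by ring
    _ ≤ gfun adj s d V j x + theta adj s d j * ((y - x) / V j) := by
      gcongr
      exact le_max_right _ _

/-- `a` is a valid uncapped demand dual `a_j` for supply duals `β`: at `a`, contract `j` receives
exactly its demand. The Stage One update is `min (p j) a`. -/
def AlphaSpec (adj : I → J → Prop) (s : I → ℝ) (d V : J → ℝ) (β : I → ℝ) (j : J) (a : ℝ) : Prop :=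
  ∑ i ∈ GammaD adj j, s i * gfun adj s d V j (a - β i) = d j

namespace AlphaSpec

theorem zero (hd : 0 ≤ d j) (hS : 0 < Stot adj s j) : AlphaSpec adj s d V 0 j 0 := by
  have hθ : 0 ≤ theta adj s d j := div_nonneg hd hS.le
  simpa only [AlphaSpec, Pi.zero_apply, sub_zero, gfun_zero hθ] using sum_supply_mul_theta hS.ne'

theorem mono (hs : ∀ i, 0 ≤ s i) (hd : 0 < d j) (hV : 0 < V j) (hS : 0 < Stot adj s j)
    {β β' : I → ℝ} (hβ : β ≤ β') {a a' : ℝ} (ha : AlphaSpec adj s d V β j a)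
    (ha' : AlphaSpec adj s d V β' j a') : a ≤ a' := by
  by_contra! hlt
  have hθ := theta_pos hd hS
  have arg_lt (i : I) : a' - β' i < a - β i := by linarith [hβ i]
  have delivery_lt : ∑ i ∈ GammaD adj j, s i * gfun adj s d V j (a' - β' i) <
      ∑ i ∈ GammaD adj j, s i * gfun adj s d V j (a - β i) := by
    refine sum_lt_sum_of_lt_of_pos
      (fun i _ ↦ mul_le_mul_of_nonneg_left (gfun_mono hθ.le hV.le (arg_lt i).le) (hs i))
      (fun i _ hi ↦ ?_) (hd.trans_eq ha'.symm)
    have hg : 0 < gfun adj s d V j (a' - β' i) := pos_of_mul_pos_right hi (hs i)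
    have hsi : 0 < s i := pos_of_mul_pos_left hi hg.le
    exact mul_lt_mul_of_pos_left (gfun_lt_gfun_of_pos hθ hV hg (arg_lt i)) hsi
  exact delivery_lt.ne (ha'.trans ha.symm)

theorem nonneg (hs : ∀ i, 0 ≤ s i) (hd : 0 < d j) (hV : 0 < V j) (hS : 0 < Stot adj s j)
    {β : I → ℝ} (hβ : 0 ≤ β) {a : ℝ} (ha : AlphaSpec adj s d V β j a) : 0 ≤ a :=
  mono hs hd hV hS hβ (zero hd.le hS) ha

theorem demand_le_Dproj_add (hs : ∀ i, 0 ≤ s i) (hd : 0 ≤ d j) (hV : 0 ≤ V j)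
    (hS : 0 < Stot adj s j) {α : J → ℝ} {β : I → ℝ} {a : ℝ} (ha : AlphaSpec adj s d V β j a)
    (hαa : α j ≤ a) : d j ≤ Dproj adj s d V α β j + d j * ((a - α j) / V j) := by
  have hθ : 0 ≤ theta adj s d j := div_nonneg hd hS.le
  have gfun_le (i : I) : gfun adj s d V j (a - β i) ≤
      gfun adj s d V j (α j - β i) + theta adj s d j * ((a - α j) / V j) := by
    simpa only [sub_sub_sub_cancel_right] using
      gfun_le_gfun_add hθ hV (sub_le_sub_right hαa (β i))
  calc d j = ∑ i ∈ GammaD adj j, s i * gfun adj s d V j (a - β i) := ha.symm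
    _ ≤ ∑ i ∈ GammaD adj j, s i *
          (gfun adj s d V j (α j - β i) + theta adj s d j * ((a - α j) / V j)) :=
      sum_le_sum fun i _ ↦ mul_le_mul_of_nonneg_left (gfun_le i) (hs i)
    _ = Dproj adj s d V α β j +
          (∑ i ∈ GammaD adj j, s i * theta adj s d j) * ((a - α j) / V j) := by
      simp only [mul_add, ← mul_assoc, sum_add_distrib, sum_mul, Dproj]
    _ = Dproj adj s d V α β j + d j * ((a - α j) / V j) := by
      rw [sum_supply_mul_theta hS.ne']

theorem add_shortfall_le (hs : ∀ i, 0 ≤ s i) (hd : 0 < d j) (hV : 0 < V j)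
    (hS : 0 < Stot adj s j) {α : J → ℝ} {β : I → ℝ} {a : ℝ} (ha : AlphaSpec adj s d V β j a)
    (hαa : α j ≤ a) : α j + V j * (1 - Dproj adj s d V α β j / d j) ≤ a := by
  have demand_le := demand_le_Dproj_add hs hd.le hV.le hS ha hαa
  have shortfall_le : 1 - Dproj adj s d V α β j / d j ≤ (a - α j) / V j := by
    rw [one_sub_div hd.ne', div_le_iff₀' hd]
    linarith
  rw [le_div_iff₀' hV] at shortfall_le
  linarith

end AlphaSpec

end Demand

section StageOne

variable {adj : I → J → Prop} {s : I → ℝ} {d p V : J → ℝ}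

theorem BetaSpec.sum_gfun_le_one {α : J → ℝ} {i : I} {b : ℝ} (hb : BetaSpec adj s d V α i b) :
    ∑ j ∈ GammaS adj i, gfun adj s d V j (α j - b) ≤ 1 := by
  rcases hb with ⟨-, ⟨rfl, hle⟩ | heq⟩
  · simpa only [sub_zero] using hle
  · exact heq.le

theorem BetaSpec.mono (hθ : ∀ j, 0 < theta adj s d j) (hV : ∀ j, 0 < V j) {α α' : J → ℝ}
    (hα : α ≤ α') {i : I} {b b' : ℝ} (hb : BetaSpec adj s d V α i b)
    (hb' : BetaSpec adj s d V α' i b') : b ≤ b' := by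
  rcases hb with ⟨-, ⟨rfl, -⟩ | sum_eq_one⟩
  · exact hb'.1
  by_contra! hlt
  have arg_lt (j : J) : α j - b < α' j - b' := by linarith [hα j]
  have sum_lt : ∑ j ∈ GammaS adj i, gfun adj s d V j (α j - b) <
      ∑ j ∈ GammaS adj i, gfun adj s d V j (α' j - b') :=
    sum_lt_sum_of_lt_of_pos (fun j _ ↦ gfun_mono (hθ j).le (hV j).le (arg_lt j).le)
      (fun j _ hj ↦ gfun_lt_gfun_of_pos (hθ j) (hV j) hj (arg_lt j))
      (zero_lt_one.trans_eq sum_eq_one.symm)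
  exact (sum_eq_one.symm.trans_lt sum_lt).not_ge hb'.sum_gfun_le_one

theorem StageOne.monotone_alpha (hs : ∀ i, 0 ≤ s i) (hd : ∀ j, 0 < d j) (hp : ∀ j, 0 ≤ p j)
    (hV : ∀ j, 0 < V j) (hS : ∀ j, 0 < Stot adj s j) {α : ℕ → J → ℝ} {β : ℕ → I → ℝ}
    (hstage : StageOne adj s d p V α β) : Monotone α := by
  obtain ⟨hα₀, hβ, hα⟩ := hstage
  have hθ (j : J) := theta_pos (hd j) (hS j)
  refine monotone_nat_of_le_succ fun t ↦ ?_
  induction t with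
  | zero =>
    intro j
    obtain ⟨a, ha : AlphaSpec adj s d V (β 0) j a, hαa⟩ := hα 0 j
    rw [hα₀, hαa]
    exact le_min (hp j) (ha.nonneg hs (hd j) (hV j) (hS j) fun i ↦ (hβ 0 i).1)
  | succ t ih =>
    have β_le : β t ≤ β (t + 1) := fun i ↦ (hβ t i).mono hθ hV ih (hβ (t + 1) i)
    intro j
    obtain ⟨a, ha : AlphaSpec adj s d V (β t) j a, hαa⟩ := hα t j
    obtain ⟨a', ha' : AlphaSpec adj s d V (β (t + 1)) j a', hαa'⟩ := hα (t + 1) j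
    rw [hαa, hαa']
    exact min_le_min_left (p j) (ha.mono hs (hd j) (hV j) (hS j) β_le ha')

theorem StageOne.alphaSpec_succ_of_ne {α : ℕ → J → ℝ} {β : ℕ → I → ℝ}
    (hstage : StageOne adj s d p V α β) {t : ℕ} {j : J} (hne : α (t + 1) j ≠ p j) :
    AlphaSpec adj s d V (β t) j (α (t + 1) j) := by
  obtain ⟨-, -, hα⟩ := hstage
  obtain ⟨a, ha, hαa⟩ := hα t j
  have α_eq : α (t + 1) j = a :=
    hαa.trans ((min_choice (p j) a).resolve_left fun h ↦ hne (hαa.trans h))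
  rwa [α_eq]

end StageOne

theorem shale_alpha_update_growth
    (adj : I → J → Prop) (s : I → ℝ) (d p V : J → ℝ)
    (hs : ∀ i, 0 < s i) (hd : ∀ j, 0 < d j) (hp : ∀ j, 0 < p j) (hV : ∀ j, 0 < V j)
    (hS : ∀ j, 0 < Stot adj s j)
    (α : ℕ → J → ℝ) (β : ℕ → I → ℝ) (hstage : StageOne adj s d p V α β) :
    ∀ t j, α (t + 1) j ≠ p j →
      α t j + V j * (1 - Dproj adj s d V (α t) (β t) j / d j) ≤ α (t + 1) j := by
  intro t j hne
  have hs' (i : I) : 0 ≤ s i := (hs i).le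
  have α_le_succ : α t j ≤ α (t + 1) j :=
    hstage.monotone_alpha hs' hd (fun j ↦ (hp j).le) hV hS t.le_succ j
  exact (hstage.alphaSpec_succ_of_ne hne).add_shortfall_le hs' (hd j) (hV j) (hS j) α_le_succ

end
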